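/- The equality (7/4)·ζ(3) = ∑_{k=0}^∞ (3/2 + 2k) / ((2k+1)³ · binom-free form): explicitly, ∑_{k=0}^∞ ((1/2)_k (1)_k³ / ((2)_k (3/2)_k³)) · (3/2+2k) = ∑_{k=0}^∞ (3+4k)/((2k+1)³(k+1)) · c_k for the appropriate simplification, and this equals (7/4)ζ(3). -/

import Mathlib

noncomputable def poch (x : ℝ) (n : ℕ) : ℝ := ∏ i ∈ Finset.range n, (x + i)

noncomputable def zeta3 : ℝ := ∑' n : ℕ, 1 / ((n : ℝ) + 1) ^ 3

/-!
The series is the case `x = 1/2` of an acceleration formula for the Hurwitz zeta value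
`∑ₙ 1 / (x + n)³`. With `b x k = B(x, k + 1) = k! / (x)ₖ₊₁`, the functions

  `F x k = (b x k)² (1 / (k + 1) + 1 / (x + k))` and `G x k = (b x k)² (1 / (x + k) + 1 / x)`

satisfy `F x k - F (x + 1) k = G x k - G x (k + 1)`. Telescoping this relation over the quadrant
`(x + n, k)` trades the sum of `F` along the edge `n = 0` for the sum of `G` along the edge `k = 0`,
where `G (x + n) 0 = 2 / (x + n)³`. At `x = 1/2` the latter is a sum over odd integers.
-/

open Filter Topology
open scoped Nat

section WilfZeilberger

theorem sum_range_sub_eq_sum_range_sub_of_wz {E : Type*} [AddCommGroup E] {F G : ℕ → ℕ → E}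
    (wz : ∀ n k, F n k - F (n + 1) k = G n k - G n (k + 1)) (N K : ℕ) :
    ∑ k ∈ Finset.range K, (F 0 k - F N k) = ∑ n ∈ Finset.range N, (G n 0 - G n K) :=
  calc ∑ k ∈ Finset.range K, (F 0 k - F N k)
      = ∑ k ∈ Finset.range K, ∑ n ∈ Finset.range N, (F n k - F (n + 1) k) := by
        simp only [Finset.sum_range_sub' (F · _)]
    _ = ∑ n ∈ Finset.range N, ∑ k ∈ Finset.range K, (G n k - G n (k + 1)) := by
        simp only [wz, Finset.sum_comm (s := Finset.range K)]
    _ = ∑ n ∈ Finset.range N, (G n 0 - G n K) := by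
        simp only [Finset.sum_range_sub']

variable {E : Type*} [NormedAddCommGroup E] [CompleteSpace E] {F G : ℕ → ℕ → E} {bound : ℕ → ℝ}

theorem sum_range_eq_tsum_sub_tsum_of_wz
    (wz : ∀ n k, F n k - F (n + 1) k = G n k - G n (k + 1))
    (F_tendsto : ∀ k, Tendsto (F · k) atTop (𝓝 0))
    (bound_summable : Summable bound) (G_le : ∀ n k, ‖G n k‖ ≤ bound n) (K : ℕ) :
    ∑ k ∈ Finset.range K, F 0 k = ∑' n, G n 0 - ∑' n, G n K := by
  have G_summable (k : ℕ) : Summable (G · k) := bound_summable.of_norm_bounded (G_le · k)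
  have lim_F : Tendsto (fun N ↦ ∑ k ∈ Finset.range K, (F 0 k - F N k)) atTop
      (𝓝 (∑ k ∈ Finset.range K, F 0 k)) := by
    simpa only [sub_zero] using
      tendsto_finsetSum (Finset.range K) fun k _ ↦ (F_tendsto k).const_sub (F 0 k)
  have lim_G := ((G_summable 0).hasSum.sub (G_summable K).hasSum).tendsto_sum_nat
  simp only [sum_range_sub_eq_sum_range_sub_of_wz wz] at lim_F
  exact tendsto_nhds_unique lim_F lim_G

theorem tendsto_sum_range_of_wz
    (wz : ∀ n k, F n k - F (n + 1) k = G n k - G n (k + 1))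
    (F_tendsto : ∀ k, Tendsto (F · k) atTop (𝓝 0))
    (bound_summable : Summable bound) (G_le : ∀ n k, ‖G n k‖ ≤ bound n)
    (G_tendsto : ∀ n, Tendsto (G n) atTop (𝓝 0)) :
    Tendsto (fun K ↦ ∑ k ∈ Finset.range K, F 0 k) atTop (𝓝 (∑' n, G n 0)) := by
  have remainder : Tendsto (fun K ↦ ∑' n, G n K) atTop (𝓝 0) := by
    simpa only [tsum_zero] using tendsto_tsum_of_dominated_convergence bound_summable G_tendsto
      (.of_forall fun k n ↦ G_le n k)
  simpa only [sum_range_eq_tsum_sub_tsum_of_wz wz F_tendsto bound_summable G_le, sub_zero]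
    using remainder.const_sub (∑' n, G n 0)

end WilfZeilberger

section ShiftedPowers

theorem tendsto_one_div_add_nat (x : ℝ) : Tendsto (fun n : ℕ ↦ 1 / (x + n)) atTop (𝓝 0) :=
  (tendsto_atTop_add_const_left _ x tendsto_natCast_atTop_atTop).const_div_atTop 1

theorem summable_one_div_add_nat_pow (x : ℝ) {s : ℕ} (hs : 1 < s) :
    Summable fun n : ℕ ↦ 1 / (x + n) ^ s := by
  refine .of_norm (((Real.summable_one_div_nat_add_rpow x s).2 (mod_cast hs)).congr fun n ↦ ?_)
  rw [Real.rpow_natCast, norm_div, norm_one, norm_pow, Real.norm_eq_abs, add_comm]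

theorem tsum_one_div_half_add_nat_pow {s : ℕ} (hs : 1 < s) :
    ∑' n : ℕ, 1 / ((1 / 2 : ℝ) + n) ^ s = (2 ^ s - 1) * ∑' n : ℕ, 1 / ((n : ℝ) + 1) ^ s := by
  set f : ℕ → ℝ := fun n ↦ 1 / ((n : ℝ) + 1) ^ s
  have f_even (n : ℕ) : f (2 * n) = (1 / 2 ^ s) * (1 / (1 / 2 + n) ^ s) := by
    simp only [f, Nat.cast_mul, Nat.cast_two, one_div_mul_one_div, ← mul_pow]
    ring_nf
  have f_odd (n : ℕ) : f (2 * n + 1) = (1 / 2 ^ s) * f n := by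
    simp only [f, Nat.cast_add, Nat.cast_mul, Nat.cast_two, Nat.cast_one, one_div_mul_one_div,
      ← mul_pow]
    ring_nf
  have f_summable : Summable f := by
    simpa only [add_comm (1 : ℝ)] using summable_one_div_add_nat_pow 1 hs
  have split := tsum_even_add_odd (f_summable.comp_injective (mul_right_injective₀ two_ne_zero))
    (f_summable.comp_injective ((add_left_injective 1).comp (mul_right_injective₀ two_ne_zero)))
  simp only [f_even, f_odd, tsum_mul_left, ← mul_add] at split
  rw [one_div_mul_eq_div, div_eq_iff (by positivity)] at split
  linarith

end ShiftedPowers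

section Pochhammer

theorem poch_succ (x : ℝ) (k : ℕ) : poch x (k + 1) = poch x k * (x + k) :=
  Finset.prod_range_succ _ _

theorem poch_succ' (x : ℝ) (k : ℕ) : poch x (k + 1) = x * poch (x + 1) k := by
  simp only [poch, Finset.prod_range_succ', Nat.cast_add, Nat.cast_one, Nat.cast_zero, add_zero,
    mul_comm x, add_assoc, add_comm (1 : ℝ)]

theorem poch_pos {x : ℝ} (hx : 0 < x) (k : ℕ) : 0 < poch x k :=
  Finset.prod_pos fun _ _ ↦ by positivity

theorem poch_one (k : ℕ) : poch 1 k = k ! := by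
  simp only [poch, ← Finset.prod_range_add_one_eq_factorial, Nat.cast_prod, Nat.cast_add,
    Nat.cast_one, add_comm]

theorem poch_add_one {x : ℝ} (hx : x ≠ 0) (k : ℕ) : poch (x + 1) k = poch x k * (x + k) / x := by
  rw [← poch_succ, poch_succ', mul_div_cancel_left₀ _ hx]

end Pochhammer

/-- The Euler beta value `B(x, k + 1) = k! / (x)ₖ₊₁`. -/
noncomputable def betaNat (x : ℝ) (k : ℕ) : ℝ := k ! / poch x (k + 1)

section BetaNat

variable {x : ℝ}

theorem betaNat_zero (x : ℝ) : betaNat x 0 = 1 / x := by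
  simp [betaNat, poch]

theorem betaNat_succ (x : ℝ) (k : ℕ) :
    betaNat x (k + 1) = betaNat x k * ((k + 1) / (x + k + 1)) := by
  rw [betaNat, betaNat, poch_succ x (k + 1), Nat.factorial_succ, div_mul_div_comm]
  push_cast
  ring

theorem betaNat_add_one (hx : x ≠ 0) (k : ℕ) :
    betaNat (x + 1) k = betaNat x k * (x / (x + k + 1)) := by
  rw [betaNat, betaNat, poch_add_one hx, div_mul_div_comm, div_div_eq_mul_div]
  push_cast
  ring

theorem betaNat_nonneg (hx : 0 < x) (k : ℕ) : 0 ≤ betaNat x k :=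
  div_nonneg (Nat.cast_nonneg _) (poch_pos hx _).le

theorem betaNat_le (hx : 0 < x) (k : ℕ) : betaNat x k ≤ 1 / x := by
  induction k with
  | zero => exact (betaNat_zero x).le
  | succ k ih =>
    rw [betaNat_succ]
    have ratio_le_one : ((k : ℝ) + 1) / (x + k + 1) ≤ 1 :=
      div_le_one_of_le₀ (by linarith) (by positivity)
    exact (mul_le_of_le_one_right (betaNat_nonneg hx k) ratio_le_one).trans ih

theorem tendsto_betaNat_atTop (hx : 0 < x) : Tendsto (betaNat x) atTop (𝓝 0) := by
  have rpow_inv : Tendsto (fun k : ℕ ↦ ((k : ℝ) ^ x)⁻¹) atTop (𝓝 0) :=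
    ((tendsto_rpow_atTop hx).comp tendsto_natCast_atTop_atTop).inv_tendsto_atTop
  have euler_limit := rpow_inv.mul (Real.GammaSeq_tendsto_Gamma x)
  rw [zero_mul] at euler_limit
  refine euler_limit.congr' ?_
  filter_upwards [eventually_gt_atTop 0] with k hk
  have rpow_ne_zero : (k : ℝ) ^ x ≠ 0 := (Real.rpow_pos_of_pos (Nat.cast_pos.2 hk) x).ne'
  rw [Real.GammaSeq, mul_div_assoc, inv_mul_cancel_left₀ rpow_ne_zero, betaNat, poch]

end BetaNat

/-- The summand `F x k` of the accelerated series for `∑ₙ 2 / (x + n)³`. -/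
noncomputable def wzTerm (x : ℝ) (k : ℕ) : ℝ :=
  betaNat x k ^ 2 * (1 / (k + 1) + 1 / (x + k))

/-- The Wilf–Zeilberger mate `G x k` of `wzTerm`: its difference in `k` is that of `wzTerm`
in `x`. -/
noncomputable def wzMate (x : ℝ) (k : ℕ) : ℝ :=
  betaNat x k ^ 2 * (1 / (x + k) + 1 / x)

section Acceleration

variable {x : ℝ}

theorem wzTerm_sub_wzTerm_add_one (hx : 0 < x) (k : ℕ) :
    wzTerm x k - wzTerm (x + 1) k = wzMate x k - wzMate x (k + 1) := by
  simp only [wzTerm, wzMate, betaNat_succ, betaNat_add_one hx.ne', Nat.cast_add, Nat.cast_one]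
  rw [add_right_comm x 1, ← add_assoc]
  field_simp
  ring

theorem wzMate_zero (x : ℝ) : wzMate x 0 = 2 * (1 / x ^ 3) := by
  rw [wzMate, betaNat_zero, Nat.cast_zero, add_zero]
  ring

theorem wzTerm_nonneg (hx : 0 < x) (k : ℕ) : 0 ≤ wzTerm x k := by
  unfold wzTerm
  positivity

theorem wzTerm_le (hx : 0 < x) (k : ℕ) : wzTerm x k ≤ (1 / x) ^ 2 * (1 + 1 / x) := by
  have beta_nonneg := betaNat_nonneg hx k
  unfold wzTerm
  gcongr
  · exact betaNat_le hx k
  · exact div_le_one_of_le₀ (by linarith) (by positivity)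
  · linarith

theorem norm_wzMate_le (hx : 0 < x) (k : ℕ) : ‖wzMate x k‖ ≤ 2 * (1 / x ^ 3) := by
  have beta_nonneg := betaNat_nonneg hx k
  calc ‖wzMate x k‖ = betaNat x k ^ 2 * (1 / (x + k) + 1 / x) :=
        Real.norm_of_nonneg (by unfold wzMate; positivity)
    _ ≤ (1 / x) ^ 2 * (1 / x + 1 / x) := by
        gcongr
        · exact betaNat_le hx k
        · linarith
    _ = 2 * (1 / x ^ 3) := by ring

theorem tendsto_wzTerm_add_nat (hx : 0 < x) (k : ℕ) :
    Tendsto (fun n : ℕ ↦ wzTerm (x + n) k) atTop (𝓝 0) := by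
  have inv_shift := tendsto_one_div_add_nat x
  have upper := (inv_shift.pow 2).mul (inv_shift.const_add 1)
  rw [zero_pow two_ne_zero, zero_mul] at upper
  exact squeeze_zero (fun n ↦ wzTerm_nonneg (by positivity) k)
    (fun n ↦ wzTerm_le (by positivity) k) upper

theorem tendsto_wzMate_atTop (hx : 0 < x) : Tendsto (wzMate x) atTop (𝓝 0) := by
  have limit := ((tendsto_betaNat_atTop hx).pow 2).mul
    ((tendsto_one_div_add_nat x).add_const (1 / x))
  rwa [zero_pow two_ne_zero, zero_mul] at limit

theorem hasSum_wzTerm (hx : 0 < x) :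
    HasSum (wzTerm x) (2 * ∑' n : ℕ, 1 / (x + n) ^ 3) := by
  have hxn (n : ℕ) : 0 < x + n := by positivity
  have wz (n k : ℕ) : wzTerm (x + n) k - wzTerm (x + (n + 1 : ℕ)) k =
      wzMate (x + n) k - wzMate (x + n) (k + 1) := by
    rw [Nat.cast_add_one, ← add_assoc]
    exact wzTerm_sub_wzTerm_add_one (hxn n) k
  have bound_summable : Summable fun n : ℕ ↦ 2 * (1 / (x + n) ^ 3) :=
    (summable_one_div_add_nat_pow x (by norm_num)).mul_left 2
  rw [hasSum_iff_tendsto_nat_of_nonneg (wzTerm_nonneg hx)]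
  simpa only [Nat.cast_zero, add_zero, wzMate_zero, tsum_mul_left] using
    tendsto_sum_range_of_wz wz (tendsto_wzTerm_add_nat hx) bound_summable
      (fun n ↦ norm_wzMate_le (hxn n)) fun n ↦ tendsto_wzMate_atTop (hxn n)

end Acceleration

theorem poch_term_eq_wzTerm_half (k : ℕ) :
    poch (1 / 2) k * poch 1 k ^ 3 / (poch 2 k * poch (3 / 2) k ^ 3) * ((3 : ℝ) / 2 + 2 * k) =
      1 / 8 * wzTerm (1 / 2) k := by
  have poch_two : poch 2 k = k ! * (1 + k) := by
    rw [← one_add_one_eq_two, poch_add_one one_ne_zero, poch_one, div_one]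
  have poch_three_halves : poch (3 / 2) k = poch (1 / 2) k * (1 + 2 * k) := by
    rw [show (3 / 2 : ℝ) = 1 / 2 + 1 by norm_num, poch_add_one (by norm_num)]
    ring
  have poch_half_pos : 0 < poch (1 / 2) k := poch_pos one_half_pos k
  rw [poch_two, poch_three_halves, poch_one, wzTerm, betaNat, poch_succ]
  field_simp
  ring

theorem stmt18 :
    HasSum (fun k : ℕ =>
      poch (1/2) k * poch 1 k ^ 3 / (poch 2 k * poch (3/2) k ^ 3) *
        ((3:ℝ)/2 + 2 * k))
      (7/4 * zeta3) := by
  have value : 1 / 8 * (2 * ∑' n : ℕ, 1 / ((1 / 2 : ℝ) + n) ^ 3) = 7 / 4 * zeta3 := by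
    rw [tsum_one_div_half_add_nat_pow (by norm_num), zeta3]
    ring
  simp only [poch_term_eq_wzTerm_half, ← value]
  exact (hasSum_wzTerm one_half_pos).mul_left (1 / 8)
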